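/- Let (D,V) be a Dyer system of spherical type and let l = |V_∞|. Then 𝒢_{(D,V)}(t) = 𝒢_{(D_2,V_2)}(t) · 𝒢_{(D_p,V_p)}(t) · 𝒢_{(D_∞,V_∞)}(t) in ℤ[[t]]; moreover 𝒢_{(D_p,V_p)}(t) = Π_{x∈V_p} 𝒢_{(ℤ/f(x)ℤ,{1})}(t), where 𝒢_{(ℤ/2rℤ,{1})}(t) = 1 + 2t + 2t² + ⋯ + 2t^{r−1} + t^r and 𝒢_{(ℤ/(2r+1)ℤ,{1})}(t) = 1 + 2t + 2t² + ⋯ + 2t^r, and (1−t)^l · 𝒢_{(D_∞,V_∞)}(t) = (1+t)^l. -/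

import Mathlib

/-!
All edges that leave `V_2`, and all edges at a vertex `x` with `f x ≠ 2`, carry the label `2`.
So in a complete Dyer graph the generators in `V_2`, and each single generator outside `V_2`,
commute with all the remaining ones. For a set `X` of vertices all of whose outgoing edges carry
the label `2`, sending the generators outside `X` to `1` respects the relations and gives a
retraction onto `D_X` (`DyerGraph.exists_retraction`). Hence `D_X` meets `D_Y` trivially for `Y`
disjoint from `X`, and `D_{X ∪ Y}` is the internal direct product of `D_X` and `D_Y`.

In an internal direct product, a word in the union of the two generating sets splits into a word
in each of them with the same total length, so word length is additive and growth series multiply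
(`growthSeries_mul`). This gives the factorization, and reduces `D_p` and `D_∞` to the subgroups
generated by a single `x` with `f x ≠ 2`. Mapping `x` to `1 ∈ ℤ/f(x)ℤ` and all other generators to
the identity shows that such a subgroup is `ℤ/f(x)ℤ`, or `ℤ` if `f x = ∞`
(`DyerGraph.growthSeries_singleton`). Finally, the word length of an element of `ℤ/nℤ` is the least
absolute value of its integer representatives, so the cyclic growth series counts integers of
given absolute value in `(-n/2, n/2]`, or in `ℤ` when `n = 0` (`coeff_cyclicGrowthSeries`).
-/

open scoped Classical

/-- The word length of `g` with respect to the alphabet `S ∪ S⁻¹`. -/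
noncomputable def wordLength {G : Type*} [Group G] (S : Set G) (g : G) : ℕ :=
  sInf {n | ∃ w : List G, w.length = n ∧ (∀ a ∈ w, a ∈ S ∪ S⁻¹) ∧ w.prod = g}

/-- The syllable length of `g` with respect to `S`. -/
noncomputable def sylLength {G : Type*} [Group G] (S : Set G) (g : G) : ℕ :=
  sInf {n | ∃ w : List (G × ℤ), w.length = n ∧ (∀ p ∈ w, p.1 ∈ S) ∧
    (w.map fun p => p.1 ^ p.2).prod = g}

/-- The growth series of a subset `A` of a group `G` with respect to a generating set `S`:
the coefficient of `t^n` is the number of elements of `A` of word length `n`. -/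
noncomputable def growthSeries {G : Type*} [Group G] (S : Set G) (A : Set G) :
    PowerSeries ℤ :=
  PowerSeries.mk fun n => (Set.ncard {g ∈ A | wordLength S g = n} : ℤ)

/-- A Dyer graph. -/
structure DyerGraph (V : Type*) where
  Adj : V → V → Prop
  symm : ∀ {x y}, Adj x y → Adj y x
  loopless : ∀ x, ¬ Adj x x
  m : V → V → ℕ
  m_symm : ∀ x y, m x y = m y x
  m_ge : ∀ {x y}, Adj x y → 2 ≤ m x y
  f : V → ℕ∞
  f_ge : ∀ x, 2 ≤ f x
  compat : ∀ {x y}, Adj x y → m x y ≠ 2 → f x = 2 ∧ f y = 2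

namespace DyerGraph

variable {V : Type*} (Γ : DyerGraph V)

/-- The alternating word `π(x, y, n) = xyxy⋯` of length `n` in the free group. -/
def altWord (x y : V) : ℕ → FreeGroup V
  | 0 => 1
  | n + 1 => FreeGroup.of x * altWord y x n

/-- The defining relations of the Dyer group. -/
def rels : Set (FreeGroup V) :=
  {r | ∃ x : V, Γ.f x ≠ ⊤ ∧ r = FreeGroup.of x ^ (Γ.f x).toNat} ∪
  {r | ∃ x y : V, Γ.Adj x y ∧
      r = altWord x y (Γ.m x y) * (altWord y x (Γ.m x y))⁻¹}

/-- The Dyer group associated to a Dyer graph. -/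
abbrev DyerGroup := PresentedGroup Γ.rels

/-- The standard generator of the Dyer group corresponding to a vertex. -/
def gen (x : V) : Γ.DyerGroup := PresentedGroup.of x

/-- The standard parabolic subgroup generated by `X ⊆ V`. -/
def parabolic (X : Set V) : Subgroup Γ.DyerGroup := Subgroup.closure (Γ.gen '' X)

/-- The set of vertices with `f x = 2`. -/
def V2 : Set V := {x | Γ.f x = 2}

/-- The set of vertices with `2 < f x < ∞`. -/
def Vp : Set V := {x | 2 < Γ.f x ∧ Γ.f x ≠ ⊤}

/-- The set of vertices with `f x = ∞`. -/
def Vinf : Set V := {x | Γ.f x = ⊤}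

/-- A Dyer group is of spherical type if the graph is complete and `D_2` is finite. -/
def Spherical : Prop :=
  (∀ x y : V, x ≠ y → Γ.Adj x y) ∧ (Γ.parabolic Γ.V2 : Set Γ.DyerGroup).Finite

/-- The set `A_X` of `X`-minimal elements. -/
def Amin (X : Set V) : Set Γ.DyerGroup :=
  {g | ∀ h ∈ Γ.parabolic X,
    sylLength (Set.range Γ.gen) g ≤ sylLength (Set.range Γ.gen) (g * h)}

/-- The set `B_X = A_X ∖ ⋃_{X ⊊ Y} A_Y`. -/
def Bmin (X : Set V) : Set Γ.DyerGroup :=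
  Γ.Amin X \ ⋃ (Y : Set V) (_ : X ⊂ Y), Γ.Amin Y

end DyerGraph

/-- The growth series of the cyclic group `ℤ/nℤ` (the infinite cyclic group if `n = 0`)
with respect to the generating set `{1}`. -/
noncomputable def cyclicGrowthSeries (n : ℕ) : PowerSeries ℤ :=
  growthSeries ({Multiplicative.ofAdd (1 : ZMod n)} : Set (Multiplicative (ZMod n)))
    Set.univ

/-! ### Word length -/

section WordLength

variable {G : Type*} [Group G]

theorem wordLength_le {S : Set G} (w : List G) (hw : ∀ a ∈ w, a ∈ S ∪ S⁻¹) :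
    wordLength S w.prod ≤ w.length :=
  Nat.sInf_le ⟨w, rfl, hw, rfl⟩

theorem exists_word {S : Set G} {g : G} (hg : g ∈ Subgroup.closure S) :
    ∃ w : List G, w.length = wordLength S g ∧ (∀ a ∈ w, a ∈ S ∪ S⁻¹) ∧ w.prod = g := by
  rw [← Subgroup.mem_toSubmonoid, Subgroup.closure_toSubmonoid] at hg
  obtain ⟨w, hw, hp⟩ := Submonoid.exists_list_of_mem_closure hg
  exact Nat.sInf_mem (s := {n | ∃ w : List G, w.length = n ∧ (∀ a ∈ w, a ∈ S ∪ S⁻¹) ∧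
    w.prod = g}) ⟨w.length, w, rfl, hw, hp⟩

theorem mem_closure_of_mem_symm {S : Set G} {a : G} (ha : a ∈ S ∪ S⁻¹) :
    a ∈ Subgroup.closure S := by
  rcases ha with ha | ha
  · exact Subgroup.subset_closure ha
  · exact (Subgroup.inv_mem_iff _).1 (Subgroup.subset_closure ha)

theorem sphere_finite {S : Set G} (hS : S.Finite) (n : ℕ) :
    {g ∈ (Subgroup.closure S : Set G) | wordLength S g = n}.Finite := by
  have hfin : Finite ↥(S ∪ S⁻¹) := (hS.union hS.inv).to_subtype
  refine ((List.finite_length_eq ↥(S ∪ S⁻¹) n).image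
    (fun l => (l.map Subtype.val).prod)).subset ?_
  rintro g ⟨hg, hn⟩
  obtain ⟨w, hlen, hw, hp⟩ := exists_word hg
  lift w to List ↥(S ∪ S⁻¹) using hw
  exact ⟨w, by simpa [hn] using hlen, hp⟩

/-- An injective homomorphism carries growth series to growth series. -/
theorem growthSeries_map {H : Type*} [Group H] (φ : H →* G) (hφ : Function.Injective φ)
    (S A : Set H) : growthSeries (φ '' S) (φ '' A) = growthSeries S A := by
  have hinv : φ '' S ∪ (φ '' S)⁻¹ = φ '' (S ∪ S⁻¹) := by
    rw [Set.image_union, Set.image_inv]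
  have hlen (g : H) : wordLength (φ '' S) (φ g) = wordLength S g := by
    unfold wordLength
    congr 1
    ext n
    simp only [Set.mem_ofPred_eq, hinv]
    constructor
    · rintro ⟨w, rfl, hw, hp⟩
      obtain ⟨v, hv, rfl⟩ : ∃ v : List H, (∀ a ∈ v, a ∈ S ∪ S⁻¹) ∧ v.map φ = w := by
        clear hp
        induction w with
        | nil => exact ⟨[], by simp, rfl⟩
        | cons a w ih =>
          obtain ⟨v, hv, rfl⟩ := ih fun b hb => hw b (List.mem_cons_of_mem _ hb)
          obtain ⟨b, hb, rfl⟩ := hw a List.mem_cons_self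
          exact ⟨b :: v, by simpa [List.forall_mem_cons] using ⟨hb, hv⟩, rfl⟩
      exact ⟨v, by simp, hv, hφ (by rw [map_list_prod]; exact hp)⟩
    · rintro ⟨w, rfl, hw, rfl⟩
      exact ⟨w.map φ, by simp, List.forall_mem_map.2 fun a ha => Set.mem_image_of_mem φ (hw a ha),
        (map_list_prod φ w).symm⟩
  ext n
  simp only [growthSeries, PowerSeries.coeff_mk]
  rw [← Set.ncard_image_of_injective _ hφ]
  congr 2
  ext g
  constructor
  · rintro ⟨⟨a, ha, rfl⟩, hn⟩
    exact ⟨a, ⟨ha, by rwa [hlen] at hn⟩, rfl⟩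
  · rintro ⟨a, ⟨ha, hn⟩, rfl⟩
    exact ⟨⟨a, ha, rfl⟩, by rwa [hlen]⟩

end WordLength

/-! ### Growth of internal direct products -/

section DirectProduct

variable {G : Type*} [Group G] {S T : Set G}

theorem commute_closure (hc : ∀ s ∈ S, ∀ t ∈ T, Commute s t) {a b : G}
    (ha : a ∈ Subgroup.closure S) (hb : b ∈ Subgroup.closure T) : Commute a b := by
  have h1 : Subgroup.closure S ≤ Subgroup.centralizer T := by
    rw [Subgroup.closure_le]
    intro s hs
    exact Subgroup.mem_centralizer_iff.2 fun t ht => (hc s hs t ht).symm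
  have h2 : Subgroup.closure T ≤ Subgroup.centralizer (Subgroup.closure S : Set G) := by
    rw [Subgroup.closure_le]
    intro t ht
    exact Subgroup.mem_centralizer_iff.2 fun s hs =>
      (Subgroup.mem_centralizer_iff.1 (h1 hs) t ht).symm
  exact Subgroup.mem_centralizer_iff.1 (h2 hb) a ha

/-- A word in commuting alphabets splits, without change of total length, into a word in the
first alphabet followed by a word in the second. -/
theorem split_word (hc : ∀ s ∈ S, ∀ t ∈ T, Commute s t) (w : List G)
    (hw : ∀ a ∈ w, a ∈ (S ∪ T) ∪ (S ∪ T)⁻¹) :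
    ∃ u v : List G, (∀ a ∈ u, a ∈ S ∪ S⁻¹) ∧ (∀ a ∈ v, a ∈ T ∪ T⁻¹) ∧
      u.length + v.length = w.length ∧ u.prod * v.prod = w.prod := by
  induction w with
  | nil => exact ⟨[], [], by simp, by simp, rfl, by simp⟩
  | cons a w ih =>
    obtain ⟨u, v, hu, hv, hl, hp⟩ := ih fun b hb => hw b (List.mem_cons_of_mem _ hb)
    have ha : a ∈ S ∪ S⁻¹ ∨ a ∈ T ∪ T⁻¹ := by
      rcases hw a List.mem_cons_self with (h | h) | (h | h)
      exacts [.inl (.inl h), .inr (.inl h), .inl (.inr h), .inr (.inr h)]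
    rcases ha with ha | ha
    · refine ⟨a :: u, v, List.forall_mem_cons.2 ⟨ha, hu⟩, hv, ?_, ?_⟩
      · simp only [List.length_cons]; omega
      · rw [List.prod_cons, List.prod_cons, mul_assoc, hp]
    · refine ⟨u, a :: v, hu, List.forall_mem_cons.2 ⟨ha, hv⟩, ?_, ?_⟩
      · simp only [List.length_cons]; omega
      · have hcomm : Commute u.prod a := commute_closure hc
          (Subgroup.list_prod_mem _ fun b hb => mem_closure_of_mem_symm (hu b hb))
          (mem_closure_of_mem_symm ha)
        rw [List.prod_cons, List.prod_cons, ← mul_assoc, hcomm.eq, mul_assoc, hp]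

theorem mul_unique (hd : Disjoint (Subgroup.closure S) (Subgroup.closure T)) {a a' b b' : G}
    (ha : a ∈ Subgroup.closure S) (ha' : a' ∈ Subgroup.closure S)
    (hb : b ∈ Subgroup.closure T) (hb' : b' ∈ Subgroup.closure T) (h : a * b = a' * b') :
    a = a' ∧ b = b' := by
  have := Subgroup.mul_injective_of_disjoint hd
    (a₁ := (⟨a, ha⟩, ⟨b, hb⟩)) (a₂ := (⟨a', ha'⟩, ⟨b', hb'⟩)) h
  simpa using this

theorem wordLength_mul (hc : ∀ s ∈ S, ∀ t ∈ T, Commute s t)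
    (hd : Disjoint (Subgroup.closure S) (Subgroup.closure T)) {a b : G}
    (ha : a ∈ Subgroup.closure S) (hb : b ∈ Subgroup.closure T) :
    wordLength (S ∪ T) (a * b) = wordLength S a + wordLength T b := by
  apply le_antisymm
  · obtain ⟨u, hul, hu, hup⟩ := exists_word ha
    obtain ⟨v, hvl, hv, hvp⟩ := exists_word hb
    have := wordLength_le (S := S ∪ T) (u ++ v) (by
      intro c hc
      rcases List.mem_append.1 hc with h | h
      · rcases hu c h with h | h
        exacts [.inl (.inl h), .inr (.inl h)]
      · rcases hv c h with h | h
        exacts [.inl (.inr h), .inr (.inr h)])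
    rwa [List.prod_append, hup, hvp, List.length_append, hul, hvl] at this
  · have hab : a * b ∈ Subgroup.closure (S ∪ T) := mul_mem
      (Subgroup.closure_mono Set.subset_union_left ha)
      (Subgroup.closure_mono Set.subset_union_right hb)
    obtain ⟨w, hwl, hw, hwp⟩ := exists_word hab
    obtain ⟨u, v, hu, hv, hl, hp⟩ := split_word hc w hw
    obtain ⟨rfl, rfl⟩ := mul_unique hd ha
      (Subgroup.list_prod_mem _ fun c hc => mem_closure_of_mem_symm (hu c hc)) hb
      (Subgroup.list_prod_mem _ fun c hc => mem_closure_of_mem_symm (hv c hc))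
      (hwp.symm.trans hp.symm)
    have h1 := wordLength_le u hu
    have h2 := wordLength_le v hv
    omega

/-- Growth series are multiplicative over internal direct products, for the union of the two
generating sets. -/
theorem growthSeries_mul (hS : S.Finite) (hT : T.Finite)
    (hc : ∀ s ∈ S, ∀ t ∈ T, Commute s t)
    (hd : Disjoint (Subgroup.closure S) (Subgroup.closure T)) :
    growthSeries (S ∪ T) (Subgroup.closure (S ∪ T) : Set G) =
      growthSeries S (Subgroup.closure S : Set G) *
        growthSeries T (Subgroup.closure T : Set G) := by
  ext n
  rw [PowerSeries.coeff_mul]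
  simp only [growthSeries, PowerSeries.coeff_mk]
  simp only [Set.ncard_eq_toFinset_card _ (sphere_finite hS _),
    Set.ncard_eq_toFinset_card _ (sphere_finite hT _),
    Set.ncard_eq_toFinset_card _ (sphere_finite (hS.union hT) _)]
  simp only [← Nat.cast_mul, ← Nat.cast_sum, ← Finset.card_product, ← Finset.card_sigma]
  congr 1
  symm
  refine Finset.card_bij (fun q _ => q.2.1 * q.2.2) ?_ ?_ ?_
  · rintro ⟨⟨i, j⟩, a, b⟩ hq
    simp only [Finset.mem_sigma, Finset.HasAntidiagonal.mem_antidiagonal, Finset.mem_product,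
      Set.Finite.mem_toFinset, Set.mem_ofPred_eq, SetLike.mem_coe] at hq ⊢
    obtain ⟨hij, ⟨ha, hi⟩, hb, hj⟩ := hq
    exact ⟨mul_mem (Subgroup.closure_mono Set.subset_union_left ha)
      (Subgroup.closure_mono Set.subset_union_right hb),
      by rw [wordLength_mul hc hd ha hb, hi, hj, hij]⟩
  · rintro ⟨⟨i, j⟩, a, b⟩ hq ⟨⟨i', j'⟩, a', b'⟩ hq' h
    simp only [Finset.mem_sigma, Finset.HasAntidiagonal.mem_antidiagonal, Finset.mem_product,
      Set.Finite.mem_toFinset, Set.mem_ofPred_eq, SetLike.mem_coe] at hq hq' h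
    obtain ⟨-, ⟨ha, rfl⟩, hb, rfl⟩ := hq
    obtain ⟨-, ⟨ha', rfl⟩, hb', rfl⟩ := hq'
    obtain ⟨rfl, rfl⟩ := mul_unique hd ha ha' hb hb' h
    rfl
  · intro g hg
    simp only [Set.Finite.mem_toFinset, Set.mem_ofPred_eq, SetLike.mem_coe] at hg
    obtain ⟨hg, hn⟩ := hg
    obtain ⟨w, -, hw, hwp⟩ := exists_word hg
    obtain ⟨u, v, hu, hv, -, hp⟩ := split_word hc w hw
    have ha := Subgroup.list_prod_mem _ fun c hc => mem_closure_of_mem_symm (hu c hc)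
    have hb := Subgroup.list_prod_mem _ fun c hc => mem_closure_of_mem_symm (hv c hc)
    refine ⟨⟨(wordLength S u.prod, wordLength T v.prod), u.prod, v.prod⟩, ?_, hp.trans hwp⟩
    simp only [Finset.mem_sigma, Finset.HasAntidiagonal.mem_antidiagonal, Finset.mem_product,
      Set.Finite.mem_toFinset, Set.mem_ofPred_eq, SetLike.mem_coe]
    refine ⟨?_, ⟨ha, trivial⟩, hb, trivial⟩
    rw [← wordLength_mul hc hd ha hb, hp, hwp, hn]

end DirectProduct

/-! ### Cyclic groups -/

theorem natAbs_valMinAbs_one_le (n : ℕ) : (1 : ZMod n).valMinAbs.natAbs ≤ 1 := by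
  rcases n with _ | _ | n
  · exact le_rfl
  · exact (ZMod.natAbs_valMinAbs_le (1 : ZMod 1)).trans (by simp)
  · rw [(ZMod.valMinAbs_spec (1 : ZMod (n + 1 + 1)) 1).2
      ⟨by simp, by constructor <;> push_cast <;> omega⟩]
    rfl

theorem wordLength_zmod (n : ℕ) (k : ZMod n) :
    wordLength ({Multiplicative.ofAdd (1 : ZMod n)} : Set (Multiplicative (ZMod n)))
      (Multiplicative.ofAdd k) = k.valMinAbs.natAbs := by
  set s : Multiplicative (ZMod n) := Multiplicative.ofAdd 1 with hs
  have hk : Multiplicative.ofAdd k = s ^ k.valMinAbs := by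
    rw [hs, ← ofAdd_zsmul]
    simp
  apply le_antisymm
  · rcases Int.natAbs_eq k.valMinAbs with h | h
    · have := wordLength_le (S := {s}) (List.replicate k.valMinAbs.natAbs s)
        (fun a ha => .inl (List.eq_of_mem_replicate ha))
      rwa [List.prod_replicate, List.length_replicate, ← zpow_natCast, ← h, ← hk] at this
    · have := wordLength_le (S := {s}) (List.replicate k.valMinAbs.natAbs s⁻¹)
        (fun a ha => .inr (by rw [List.eq_of_mem_replicate ha]; simp))
      rwa [List.prod_replicate, List.length_replicate, inv_pow, ← zpow_natCast, ← zpow_neg,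
        ← h, ← hk] at this
  · have key : ∀ w : List (Multiplicative (ZMod n)), (∀ a ∈ w, a ∈ ({s} ∪ {s}⁻¹ : Set _)) →
        (Multiplicative.toAdd w.prod).valMinAbs.natAbs ≤ w.length := by
      intro w
      induction w with
      | nil => simp
      | cons a w ih =>
        intro hw
        obtain ⟨ha, hw⟩ := List.forall_mem_cons.1 hw
        have h1 : (Multiplicative.toAdd a).valMinAbs.natAbs ≤ 1 := by
          rcases ha with ha | ha
          · rw [Set.mem_singleton_iff.1 ha]
            exact natAbs_valMinAbs_one_le n
          · rw [← inv_inv a, Set.mem_singleton_iff.1 (Set.mem_inv.1 ha), toAdd_inv,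
              ZMod.natAbs_valMinAbs_neg]
            exact natAbs_valMinAbs_one_le n
        have h2 := ih hw
        rw [List.prod_cons, toAdd_mul, List.length_cons]
        have h3 := ZMod.natAbs_valMinAbs_add_le (Multiplicative.toAdd a)
          (Multiplicative.toAdd w.prod)
        omega
    obtain ⟨w, hl, hw, hp⟩ := exists_word (S := {s}) (g := Multiplicative.ofAdd k)
      (by rw [hk]; exact zpow_mem (Subgroup.subset_closure (Set.mem_singleton s)) _)
    have := key w hw
    rw [hp, hl] at this
    exact this

/-- The coefficients of the cyclic growth series count integers: elements of `ℤ/nℤ` correspond to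
their representatives `z` of least absolute value, which is their word length. -/
theorem coeff_cyclicGrowthSeries (n i : ℕ) :
    PowerSeries.coeff i (cyclicGrowthSeries n) =
      (Set.ncard {z : ℤ | z.natAbs = i ∧ (n = 0 ∨ z * 2 ∈ Set.Ioc (-n : ℤ) n)} : ℤ) := by
  rw [cyclicGrowthSeries, growthSeries, PowerSeries.coeff_mk]
  congr 1
  refine Set.ncard_congr (fun a _ => (Multiplicative.toAdd a).valMinAbs) ?_ ?_ ?_
  · rintro a ⟨-, ha⟩
    refine ⟨by rw [← ha, ← wordLength_zmod]; rfl, ?_⟩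
    rcases n.eq_zero_or_pos with h | h
    · exact .inl h
    · have : NeZero n := ⟨h.ne'⟩
      exact .inr (ZMod.valMinAbs_mem_Ioc _)
  · intro a b _ _ h
    exact Multiplicative.toAdd.injective (ZMod.valMinAbs_inj.1 h)
  · rintro z ⟨hz, hn⟩
    have hv : (z : ZMod n).valMinAbs = z := by
      rcases n.eq_zero_or_pos with rfl | h
      · rfl
      · have : NeZero n := ⟨h.ne'⟩
        exact (ZMod.valMinAbs_spec _ _).2 ⟨rfl, hn.resolve_left h.ne'⟩
    exact ⟨Multiplicative.ofAdd (z : ZMod n),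
      ⟨trivial, by rw [wordLength_zmod, hv, hz]⟩, hv⟩

theorem ncard_int_pair {i : ℕ} (hi : i ≠ 0) : Set.ncard {(i : ℤ), -(i : ℤ)} = 2 :=
  Set.ncard_pair (by omega)

theorem cyclicGrowthSeries_even (r : ℕ) (hr : 1 ≤ r) : cyclicGrowthSeries (2 * r) =
    1 + (∑ i ∈ Finset.Ioo 0 r, 2 * (PowerSeries.X : PowerSeries ℤ) ^ i) +
      (PowerSeries.X : PowerSeries ℤ) ^ r := by
  ext i
  have hcoeff : PowerSeries.coeff i (∑ j ∈ Finset.Ioo 0 r, 2 * (PowerSeries.X : PowerSeries ℤ) ^ j)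
      = if i ∈ Finset.Ioo 0 r then 2 else 0 := by
    rw [map_sum, ← Finset.sum_ite_eq (Finset.Ioo 0 r) i (fun _ => (2 : ℤ))]
    refine Finset.sum_congr rfl fun j _ => ?_
    rw [two_mul, map_add, PowerSeries.coeff_X_pow]
    split_ifs <;> rfl
  rw [coeff_cyclicGrowthSeries, map_add, map_add, hcoeff, PowerSeries.coeff_one,
    PowerSeries.coeff_X_pow]
  simp only [Finset.mem_Ioo]
  rcases Nat.eq_zero_or_pos i with rfl | hi
  · rw [show {z : ℤ | z.natAbs = 0 ∧ (2 * r = 0 ∨ z * 2 ∈ Set.Ioc (-(2 * r : ℕ) : ℤ) (2 * r : ℕ))}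
      = {0} by ext z; simp only [Set.mem_ofPred_eq, Set.mem_Ioc, Set.mem_singleton_iff]; omega]
    rw [Set.ncard_singleton]
    simp; omega
  rcases lt_trichotomy i r with h | rfl | h
  · rw [show {z : ℤ | z.natAbs = i ∧ (2 * r = 0 ∨ z * 2 ∈ Set.Ioc (-(2 * r : ℕ) : ℤ) (2 * r : ℕ))}
      = {(i : ℤ), -(i : ℤ)} by
        ext z
        simp only [Set.mem_ofPred_eq, Set.mem_Ioc, Set.mem_singleton_iff, Set.mem_insert_iff]
        omega, ncard_int_pair hi.ne']
    simp [hi, h, hi.ne', h.ne]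
  · rw [show {z : ℤ | z.natAbs = i ∧ (2 * i = 0 ∨ z * 2 ∈ Set.Ioc (-(2 * i : ℕ) : ℤ) (2 * i : ℕ))}
      = {(i : ℤ)} by
        ext z
        simp only [Set.mem_ofPred_eq, Set.mem_Ioc, Set.mem_singleton_iff]
        omega, Set.ncard_singleton]
    simp [hi.ne']
  · rw [show {z : ℤ | z.natAbs = i ∧ (2 * r = 0 ∨ z * 2 ∈ Set.Ioc (-(2 * r : ℕ) : ℤ) (2 * r : ℕ))}
      = ∅ by
        refine Set.eq_empty_iff_forall_notMem.2 fun z hz => ?_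
        simp only [Set.mem_ofPred_eq, Set.mem_Ioc] at hz
        omega, Set.ncard_empty]
    simp [hi.ne', h.ne', h.not_gt]

theorem cyclicGrowthSeries_odd (r : ℕ) : cyclicGrowthSeries (2 * r + 1) =
    1 + ∑ i ∈ Finset.Icc 1 r, 2 * (PowerSeries.X : PowerSeries ℤ) ^ i := by
  ext i
  have hcoeff : PowerSeries.coeff i (∑ j ∈ Finset.Icc 1 r, 2 * (PowerSeries.X : PowerSeries ℤ) ^ j)
      = if i ∈ Finset.Icc 1 r then 2 else 0 := by
    rw [map_sum, ← Finset.sum_ite_eq (Finset.Icc 1 r) i (fun _ => (2 : ℤ))]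
    refine Finset.sum_congr rfl fun j _ => ?_
    rw [two_mul, map_add, PowerSeries.coeff_X_pow]
    split_ifs <;> rfl
  rw [coeff_cyclicGrowthSeries, map_add, hcoeff, PowerSeries.coeff_one]
  simp only [Finset.mem_Icc]
  rcases Nat.eq_zero_or_pos i with rfl | hi
  · rw [show {z : ℤ | z.natAbs = 0 ∧
        (2 * r + 1 = 0 ∨ z * 2 ∈ Set.Ioc (-(2 * r + 1 : ℕ) : ℤ) (2 * r + 1 : ℕ))}
      = {0} by ext z; simp only [Set.mem_ofPred_eq, Set.mem_Ioc, Set.mem_singleton_iff]; omega]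
    simp
  rcases le_or_gt i r with h | h
  · rw [show {z : ℤ | z.natAbs = i ∧
        (2 * r + 1 = 0 ∨ z * 2 ∈ Set.Ioc (-(2 * r + 1 : ℕ) : ℤ) (2 * r + 1 : ℕ))}
      = {(i : ℤ), -(i : ℤ)} by
        ext z
        simp only [Set.mem_ofPred_eq, Set.mem_Ioc, Set.mem_singleton_iff, Set.mem_insert_iff]
        omega, ncard_int_pair hi.ne']
    simp [hi.ne', h, Nat.one_le_iff_ne_zero]
  · rw [show {z : ℤ | z.natAbs = i ∧
        (2 * r + 1 = 0 ∨ z * 2 ∈ Set.Ioc (-(2 * r + 1 : ℕ) : ℤ) (2 * r + 1 : ℕ))}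
      = ∅ by
        refine Set.eq_empty_iff_forall_notMem.2 fun z hz => ?_
        simp only [Set.mem_ofPred_eq, Set.mem_Ioc] at hz
        omega, Set.ncard_empty]
    simp [hi.ne', h.not_ge]

theorem cyclicGrowthSeries_zero :
    (1 - (PowerSeries.X : PowerSeries ℤ)) * cyclicGrowthSeries 0 = 1 + PowerSeries.X := by
  have h0 : PowerSeries.coeff 0 (cyclicGrowthSeries 0) = 1 := by
    rw [coeff_cyclicGrowthSeries]
    rw [show {z : ℤ | z.natAbs = 0 ∧
        (0 = 0 ∨ z * 2 ∈ Set.Ioc (-(0 : ℕ) : ℤ) (0 : ℕ))} = {0} by ext z; simp]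
    simp
  have hpos (i : ℕ) : PowerSeries.coeff (i + 1) (cyclicGrowthSeries 0) = 2 := by
    rw [coeff_cyclicGrowthSeries]
    rw [show {z : ℤ | z.natAbs = i + 1 ∧
        (0 = 0 ∨ z * 2 ∈ Set.Ioc (-(0 : ℕ) : ℤ) (0 : ℕ))} = {((i + 1 : ℕ) : ℤ), -((i + 1 : ℕ) : ℤ)} by
          ext z
          simp only [Set.mem_ofPred_eq, Set.mem_singleton_iff, Set.mem_insert_iff, true_or,
            and_true]
          omega, ncard_int_pair (Nat.succ_ne_zero i)]
    rfl
  ext i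
  rw [sub_mul, one_mul, map_sub, map_add]
  rcases i with _ | _ | i
  · rw [h0, PowerSeries.coeff_zero_X_mul]; simp
  · rw [hpos, PowerSeries.coeff_succ_X_mul, h0, PowerSeries.coeff_one, PowerSeries.coeff_X]
    simp
  · rw [hpos, PowerSeries.coeff_succ_X_mul, hpos, PowerSeries.coeff_one, PowerSeries.coeff_X]
    simp

/-! ### Parabolic subgroups of Dyer groups -/

namespace DyerGraph

variable {V : Type*} (Γ : DyerGraph V)

/-- `X` is isolated if every edge leaving `X` has label `2`, so that the generators in `X` commute
with all adjacent generators outside `X`. -/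
def Isolated (X : Set V) : Prop := ∀ x ∈ X, ∀ y ∉ X, Γ.Adj x y → Γ.m x y = 2

theorem isolated_V2 : Γ.Isolated Γ.V2 := fun _ _ _ hy hxy =>
  by_contra fun hm => hy (Γ.compat hxy hm).2

theorem isolated_of_forall_ne_two {X : Set V} (hX : ∀ x ∈ X, Γ.f x ≠ 2) : Γ.Isolated X :=
  fun x hx _ _ hxy => by_contra fun hm => hX x hx (Γ.compat hxy hm).1

theorem lift_altWord_congr {G : Type*} [Group G] {φ ψ : V → G} {x y : V} (hx : φ x = ψ x)
    (hy : φ y = ψ y) (n : ℕ) :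
    FreeGroup.lift φ (altWord x y n) = FreeGroup.lift ψ (altWord x y n) := by
  induction n generalizing x y with
  | zero => simp [altWord]
  | succ n ih => simp only [altWord, map_mul, FreeGroup.lift_apply_of, hx, ih hy hx]

theorem lift_altWord_one {G : Type*} [Group G] {φ : V → G} {x y : V} (hx : φ x = 1)
    (hy : φ y = 1) (n : ℕ) : FreeGroup.lift φ (altWord x y n) = 1 := by
  induction n generalizing x y with
  | zero => simp [altWord]
  | succ n ih => simp only [altWord, map_mul, FreeGroup.lift_apply_of, hx, ih hy hx, one_mul]

theorem gen_pow (x : V) (hx : Γ.f x ≠ ⊤) : Γ.gen x ^ (Γ.f x).toNat = 1 := by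
  have := PresentedGroup.one_of_mem (rels := Γ.rels) (.inl ⟨x, hx, rfl⟩)
  rwa [map_pow] at this

theorem lift_gen_altWord {x y : V} (hxy : Γ.Adj x y) :
    FreeGroup.lift Γ.gen (altWord x y (Γ.m x y)) =
      FreeGroup.lift Γ.gen (altWord y x (Γ.m x y)) := by
  have := PresentedGroup.one_of_mem (rels := Γ.rels) (.inr ⟨x, y, hxy, rfl⟩)
  have he : FreeGroup.lift Γ.gen = PresentedGroup.mk Γ.rels := by
    ext z
    rw [FreeGroup.lift_apply_of]
    rfl
  rw [he]
  rwa [map_mul, map_inv, mul_inv_eq_one] at this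

theorem commute_gen {x y : V} (hxy : Γ.Adj x y) (hm : Γ.m x y = 2) :
    Commute (Γ.gen x) (Γ.gen y) := by
  have := Γ.lift_gen_altWord hxy
  simpa [hm, altWord, commute_iff_eq] using this

theorem exists_hom {G : Type*} [Group G] (φ : V → G)
    (hpow : ∀ x, Γ.f x ≠ ⊤ → φ x ^ (Γ.f x).toNat = 1)
    (halt : ∀ x y, Γ.Adj x y → FreeGroup.lift φ (altWord x y (Γ.m x y)) =
      FreeGroup.lift φ (altWord y x (Γ.m x y))) :
    ∃ F : Γ.DyerGroup →* G, ∀ x, F (Γ.gen x) = φ x := by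
  refine ⟨PresentedGroup.toGroup (f := φ) ?_, fun x => PresentedGroup.toGroup.of _⟩
  rintro r (⟨x, hx, rfl⟩ | ⟨x, y, hxy, rfl⟩)
  · rw [map_pow, FreeGroup.lift_apply_of, hpow x hx]
  · rw [map_mul, map_inv, mul_inv_eq_one, halt x y hxy]

/-- Killing the generators outside an isolated set `X` defines a retraction onto `D_X`. -/
theorem exists_retraction {X : Set V} (hX : Γ.Isolated X) :
    ∃ F : Γ.DyerGroup →* Γ.DyerGroup, (∀ x ∈ X, F (Γ.gen x) = Γ.gen x) ∧
      ∀ x ∉ X, F (Γ.gen x) = 1 := by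
  obtain ⟨F, hF⟩ := Γ.exists_hom (fun x => if x ∈ X then Γ.gen x else 1) (by
    intro x hx
    split_ifs
    · exact Γ.gen_pow x hx
    · exact one_pow _) (by
    intro x y hxy
    by_cases hx : x ∈ X <;> by_cases hy : y ∈ X
    · rw [lift_altWord_congr (ψ := Γ.gen) (x := x) (y := y) (if_pos hx) (if_pos hy),
        lift_altWord_congr (ψ := Γ.gen) (x := y) (y := x) (if_pos hy) (if_pos hx), Γ.lift_gen_altWord hxy]
    · simp [hX x hx y hy hxy, altWord, hx, hy]
    · simp [Γ.m_symm x y, hX y hy x hx (Γ.symm hxy), altWord, hx, hy]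
    · rw [lift_altWord_one (x := x) (y := y) (if_neg hx) (if_neg hy),
        lift_altWord_one (x := y) (y := x) (if_neg hy) (if_neg hx)])
  exact ⟨F, fun x hx => (hF x).trans (if_pos hx), fun x hx => (hF x).trans (if_neg hx)⟩

theorem disjoint_parabolic {X Y : Set V} (hX : Γ.Isolated X) (hXY : Disjoint X Y) :
    Disjoint (Γ.parabolic X) (Γ.parabolic Y) := by
  obtain ⟨F, hF, hF'⟩ := Γ.exists_retraction hX
  rw [Subgroup.disjoint_def]
  intro g hgX hgY
  have h1 : F g = g := by
    have : Γ.parabolic X ≤ F.eqLocus (MonoidHom.id _) := by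
      rw [parabolic, Subgroup.closure_le]
      rintro _ ⟨x, hx, rfl⟩
      exact hF x hx
    exact this hgX
  have h2 : F g = 1 := by
    have : Γ.parabolic Y ≤ F.ker := by
      rw [parabolic, Subgroup.closure_le]
      rintro _ ⟨y, hy, rfl⟩
      exact hF' y (Set.disjoint_right.1 hXY hy)
    exact this hgY
  rw [← h1, h2]

theorem growthSeries_parabolic_union [Finite V] (hcomplete : ∀ x y : V, x ≠ y → Γ.Adj x y)
    {X Y : Set V} (hX : Γ.Isolated X) (hXY : Disjoint X Y) :
    growthSeries (Γ.gen '' (X ∪ Y)) (Γ.parabolic (X ∪ Y) : Set Γ.DyerGroup) =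
      growthSeries (Γ.gen '' X) (Γ.parabolic X : Set Γ.DyerGroup) *
        growthSeries (Γ.gen '' Y) (Γ.parabolic Y : Set Γ.DyerGroup) := by
  unfold parabolic
  rw [Set.image_union]
  refine growthSeries_mul (X.toFinite.image _) (Y.toFinite.image _) ?_
    (Γ.disjoint_parabolic hX hXY)
  rintro _ ⟨x, hx, rfl⟩ _ ⟨y, hy, rfl⟩
  have hyX : y ∉ X := Set.disjoint_right.1 hXY hy
  have hxy : Γ.Adj x y := hcomplete x y fun h => hyX (h ▸ hx)
  exact Γ.commute_gen hxy (hX x hx y hyX hxy)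

/-- A generator `x` of order `f x ≠ 2` generates a cyclic group of order exactly `f x` (infinite
cyclic for `f x = ∞`, where `(f x).toNat = 0`): killing the other generators maps it onto the
canonical generator of `ℤ/f(x)ℤ`. -/
theorem growthSeries_singleton {x : V} (hx : Γ.f x ≠ 2) :
    growthSeries (Γ.gen '' {x}) (Γ.parabolic {x} : Set Γ.DyerGroup) =
      cyclicGrowthSeries (Γ.f x).toNat := by
  set n := (Γ.f x).toNat with hn
  obtain ⟨F, hF⟩ := Γ.exists_hom
    (fun y => if y = x then Multiplicative.ofAdd (1 : ZMod n) else 1) (by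
      intro y _
      split_ifs with h
      · subst h
        rw [← hn, ← ofAdd_nsmul]
        simp
      · exact one_pow _) (by
      intro y z hyz
      have hm : y = x ∨ z = x → Γ.m y z = 2 := by
        rintro (rfl | rfl)
        · exact by_contra fun hm => hx (Γ.compat hyz hm).1
        · exact by_contra fun hm => hx (Γ.compat hyz hm).2
      by_cases h : y = x ∨ z = x
      · simp only [hm h, altWord, map_mul, FreeGroup.lift_apply_of, mul_one]
        exact mul_comm _ _
      · rw [not_or] at h
        rw [lift_altWord_one (x := y) (y := z) (if_neg h.1) (if_neg h.2),
          lift_altWord_one (x := z) (y := y) (if_neg h.2) (if_neg h.1)])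
  have hFx : F (Γ.gen x) = Multiplicative.ofAdd (1 : ZMod n) := (hF x).trans (if_pos rfl)
  have hpow : Γ.gen x ^ n = 1 := by
    by_cases ht : Γ.f x = ⊤
    · rw [hn, ht, ENat.toNat_top, pow_zero]
    · exact Γ.gen_pow x ht
  let ψ' : ZMod n →+ Additive Γ.DyerGroup :=
    ZMod.lift n ⟨zmultiplesHom _ (Additive.ofMul (Γ.gen x)), by
      rw [zmultiplesHom_apply, natCast_zsmul, ← ofMul_pow, hpow, ofMul_one]⟩
  let ψ : Multiplicative (ZMod n) →* Γ.DyerGroup := AddMonoidHom.toMultiplicativeLeft ψ'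
  have hψ (k : ℤ) : ψ (Multiplicative.ofAdd (k : ZMod n)) = Γ.gen x ^ k := by
    change Additive.toMul (ψ' (k : ZMod n)) = _
    rw [ZMod.lift_coe]
    rfl
  have hinj : Function.Injective ψ := by
    refine Function.LeftInverse.injective (g := F) fun a => ?_
    obtain ⟨k, hk⟩ := ZMod.intCast_surjective (Multiplicative.toAdd a)
    obtain rfl : Multiplicative.ofAdd (k : ZMod n) = a := by rw [hk]; rfl
    rw [hψ, map_zpow, hFx, ← ofAdd_zsmul]
    simp
  have hψ1 : ψ (Multiplicative.ofAdd (1 : ZMod n)) = Γ.gen x := by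
    simpa using hψ 1
  rw [cyclicGrowthSeries, ← growthSeries_map ψ hinj, Set.image_singleton, Set.image_singleton,
    hψ1]
  congr 1
  ext g
  rw [parabolic, Set.image_singleton, SetLike.mem_coe, Subgroup.mem_closure_singleton]
  constructor
  · rintro ⟨k, rfl⟩
    exact ⟨_, trivial, hψ k⟩
  · rintro ⟨a, -, rfl⟩
    obtain ⟨k, hk⟩ := ZMod.intCast_surjective (Multiplicative.toAdd a)
    obtain rfl : Multiplicative.ofAdd (k : ZMod n) = a := by rw [hk]; rfl
    exact ⟨k, (hψ k).symm⟩

theorem growthSeries_empty :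
    growthSeries (Γ.gen '' ∅) (Γ.parabolic ∅ : Set Γ.DyerGroup) = 1 := by
  ext n
  have h1 : wordLength (∅ : Set Γ.DyerGroup) 1 = 0 :=
    Nat.le_zero.1 (wordLength_le (S := (∅ : Set Γ.DyerGroup)) [] (by simp))
  rw [growthSeries, PowerSeries.coeff_mk, PowerSeries.coeff_one, parabolic, Set.image_empty,
    Subgroup.closure_empty]
  split_ifs with h
  · subst h
    rw [show {g ∈ ((⊥ : Subgroup Γ.DyerGroup) : Set Γ.DyerGroup) |
      wordLength (∅ : Set Γ.DyerGroup) g = 0} = {1} by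
        ext g
        simp only [SetLike.mem_coe, Subgroup.mem_bot, Set.mem_ofPred_eq, Set.mem_singleton_iff]
        exact ⟨fun h => h.1, fun h => ⟨h, h ▸ h1⟩⟩, Set.ncard_singleton]
    rfl
  · rw [show {g ∈ ((⊥ : Subgroup Γ.DyerGroup) : Set Γ.DyerGroup) |
      wordLength (∅ : Set Γ.DyerGroup) g = n} = ∅ by
        ext g
        simp only [SetLike.mem_coe, Subgroup.mem_bot, Set.mem_ofPred_eq, Set.mem_empty_iff_false,
          iff_false, not_and]
        rintro rfl
        rw [h1]
        exact Ne.symm h, Set.ncard_empty]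
    rfl

theorem growthSeries_finset [Finite V] (hcomplete : ∀ x y : V, x ≠ y → Γ.Adj x y)
    (s : Finset V) (hs : ∀ x ∈ s, Γ.f x ≠ 2) :
    growthSeries (Γ.gen '' (s : Set V)) (Γ.parabolic (s : Set V) : Set Γ.DyerGroup) =
      ∏ x ∈ s, cyclicGrowthSeries (Γ.f x).toNat := by
  induction s using Finset.induction_on with
  | empty => rw [Finset.coe_empty, Finset.prod_empty, growthSeries_empty]
  | insert a s ha ih =>
    have hfa := hs a (Finset.mem_insert_self a s)
    rw [Finset.coe_insert, Set.insert_eq, Finset.prod_insert ha,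
      Γ.growthSeries_parabolic_union hcomplete (Γ.isolated_of_forall_ne_two (by simpa using hfa))
        (by simpa using ha), Γ.growthSeries_singleton hfa,
      ih fun x hx => hs x (Finset.mem_insert_of_mem hx)]

end DyerGraph

open PowerSeries in
/-- For a Dyer system of spherical type,
`𝒢_{(D,V)} = 𝒢_{(D_2,V_2)} ⬝ 𝒢_{(D_p,V_p)} ⬝ 𝒢_{(D_∞,V_∞)}`, where
`𝒢_{(D_p,V_p)} = ∏_{x ∈ V_p} 𝒢_{(ℤ/f(x)ℤ, {1})}` with the explicit formulas for
cyclic groups, and `(1-t)^l ⬝ 𝒢_{(D_∞,V_∞)} = (1+t)^l` with `l = |V_∞|`. -/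
theorem growthSeries_of_spherical
    {V : Type} [Fintype V] (Γ : DyerGraph V) (h : Γ.Spherical)
    (l : ℕ) (hl : l = (Finset.univ.filter (fun x => x ∈ Γ.Vinf)).card) :
    growthSeries (Set.range Γ.gen) (Set.univ : Set Γ.DyerGroup) =
        growthSeries (Γ.gen '' Γ.V2) (Γ.parabolic Γ.V2 : Set Γ.DyerGroup) *
        growthSeries (Γ.gen '' Γ.Vp) (Γ.parabolic Γ.Vp : Set Γ.DyerGroup) *
        growthSeries (Γ.gen '' Γ.Vinf) (Γ.parabolic Γ.Vinf : Set Γ.DyerGroup)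
    ∧ growthSeries (Γ.gen '' Γ.Vp) (Γ.parabolic Γ.Vp : Set Γ.DyerGroup) =
        ∏ x ∈ Finset.univ.filter (fun x => x ∈ Γ.Vp), cyclicGrowthSeries (Γ.f x).toNat
    ∧ (∀ r : ℕ, 1 ≤ r → cyclicGrowthSeries (2 * r) =
        1 + (∑ i ∈ Finset.Ioo 0 r, 2 * (X : PowerSeries ℤ) ^ i) + (X : PowerSeries ℤ) ^ r)
    ∧ (∀ r : ℕ, 1 ≤ r → cyclicGrowthSeries (2 * r + 1) =
        1 + ∑ i ∈ Finset.Icc 1 r, 2 * (X : PowerSeries ℤ) ^ i)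
    ∧ (1 - (X : PowerSeries ℤ)) ^ l *
        growthSeries (Γ.gen '' Γ.Vinf) (Γ.parabolic Γ.Vinf : Set Γ.DyerGroup) =
        (1 + (X : PowerSeries ℤ)) ^ l := by
  obtain ⟨hcomplete, -⟩ := h
  have hp2 : ∀ x ∈ Γ.Vp, Γ.f x ≠ 2 := fun x hx => hx.1.ne'
  have hi2 : ∀ x ∈ Γ.Vinf, Γ.f x ≠ 2 := fun x hx h2 => by
    have : (⊤ : ℕ∞) = 2 := (show Γ.f x = ⊤ from hx).symm.trans h2
    exact absurd this (by decide)
  refine ⟨?_, ?_, cyclicGrowthSeries_even, fun r _ => cyclicGrowthSeries_odd r, ?_⟩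
  · have huniv : Γ.V2 ∪ Γ.Vp ∪ Γ.Vinf = Set.univ := by
      refine Set.eq_univ_of_forall fun x => ?_
      by_cases ht : Γ.f x = ⊤
      · exact .inr ht
      · rcases (Γ.f_ge x).eq_or_lt with h2 | h2
        · exact .inl (.inl h2.symm)
        · exact .inl (.inr ⟨h2, ht⟩)
    have hdp : Disjoint Γ.V2 Γ.Vp := Set.disjoint_left.2 fun x hx hx' => hp2 x hx' hx
    have hdi : Disjoint Γ.Vinf (Γ.V2 ∪ Γ.Vp) := Set.disjoint_left.2 fun x hx hx' =>
      hx'.elim (hi2 x hx) fun h => h.2 hx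
    have hpar : (Γ.parabolic Set.univ : Set Γ.DyerGroup) = Set.univ := by
      rw [DyerGraph.parabolic, Set.image_univ]
      exact congrArg _ (PresentedGroup.closure_range_of Γ.rels)
    rw [← hpar, ← Set.image_univ, ← huniv, Set.union_comm,
      Γ.growthSeries_parabolic_union hcomplete (Γ.isolated_of_forall_ne_two hi2) hdi,
      Γ.growthSeries_parabolic_union hcomplete Γ.isolated_V2 hdp, mul_comm]
  · have := Γ.growthSeries_finset hcomplete (Finset.univ.filter (fun x => x ∈ Γ.Vp))
      fun x hx => hp2 x (Finset.mem_filter.1 hx).2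
    rwa [Finset.coe_filter_univ, Set.ofPred_mem_eq] at this
  · have := Γ.growthSeries_finset hcomplete (Finset.univ.filter (fun x => x ∈ Γ.Vinf))
      fun x hx => hi2 x (Finset.mem_filter.1 hx).2
    rw [Finset.coe_filter_univ, Set.ofPred_mem_eq] at this
    have hconst : ∏ x ∈ Finset.univ.filter (fun x => x ∈ Γ.Vinf),
        cyclicGrowthSeries (Γ.f x).toNat = cyclicGrowthSeries 0 ^ l := by
      rw [hl]
      refine Finset.prod_eq_pow_card fun x hx => ?_
      rw [show Γ.f x = ⊤ from (Finset.mem_filter.1 hx).2, ENat.toNat_top]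
    rw [this, hconst, ← mul_pow, cyclicGrowthSeries_zero]
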